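/- Let W ∈ L^∞((0,1)²) be nonnegative and symmetric, and let ε_k → 0⁺. On the set Y of Young measures ν with ν_x([−1,1]) = 1 for a.e. x, the graphon Ginzburg–Landau functionals GL^W_{ε_k} Γ-converge to the graphon total-variation functional TV^W with respect to narrow convergence of Young measures. -/

import Mathlib

/-!
Since `|s - t| ^ 2 = s ^ 2 - 2 * s * t + t ^ 2`, the Dirichlet energy of a Young measure is a finite
sum of bilinear forms with kernel `W` in its moments. For Young measures supported in `[-1, 1]`,
narrow convergence makes the moments converge weakly-* in `L^∞`. Integration against the `L¹`
kernel `W` turns this into strong convergence in `L¹`, and a weak-* limit may be paired with a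
strong `L¹` limit. The Dirichlet energy is therefore continuous, not merely lower semicontinuous.

The double-well energy is continuous as well; it is nonnegative and vanishes exactly on the Young
measures concentrated on `{-1, 1}`. So `GL^W_ε` is a continuous functional plus a continuous
penalty with diverging weight, and its Γ-limit is the Dirichlet energy restricted to the zero set of
the penalty, with constant recovery sequences. On `{-1, 1}` one has `|s - t| ^ 2 = 2 * |s - t|`,
which identifies this restriction with `TV^W`.
-/

open MeasureTheory Filter
open scoped Classical

noncomputable section

/-- The open unit interval `(0,1)` as a subset of `ℝ`. -/
def I01 : Set ℝ := Set.Ioo 0 1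

/-- The double-well potential `Φ(s) = (s² − 1)²`. -/
def Phi (s : ℝ) : ℝ := (s ^ 2 - 1) ^ 2

/-- A Young measure on `(0,1)`: a measurable family of Borel probability measures on `ℝ`. -/
def IsYoungMeasure (ν : ℝ → Measure ℝ) : Prop :=
  Measurable ν ∧ ∀ x, IsProbabilityMeasure (ν x)

/-- The type of Young measures `ν` with `ν_x([−1,1]) = 1` for a.e. `x ∈ (0,1)`. -/
def YMb := {ν : ℝ → Measure ℝ // IsYoungMeasure ν ∧
  ∀ᵐ x ∂(volume.restrict I01), ν x (Set.Icc (-1 : ℝ) 1) = 1}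

/-- Narrow convergence of Young measures. -/
def NarrowConv (ν : ℕ → ℝ → Measure ℝ) (μ : ℝ → Measure ℝ) : Prop :=
  ∀ f : ℝ → ℝ, Continuous f → (∃ C, ∀ s, |f s| ≤ C) →
    ∀ g : ℝ → ℝ, IntegrableOn g I01 →
      Tendsto (fun n => ∫ x in I01, g x * ∫ t, f t ∂(ν n x)) atTop
        (nhds (∫ x in I01, g x * ∫ t, f t ∂(μ x)))

/-- The graphon Dirichlet energy of a Young measure. -/
def graphonDirichlet (V : ℝ → ℝ → ℝ) (ν : ℝ → Measure ℝ) : ℝ :=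
  ∫ x in I01, ∫ y in I01, V x y * ∫ t, (∫ s, |s - t| ^ 2 ∂(ν x)) ∂(ν y)

/-- The graphon Ginzburg–Landau functional on Young measures. -/
def graphonGL (W : ℝ → ℝ → ℝ) (ε : ℝ) (ν : ℝ → Measure ℝ) : ℝ :=
  graphonDirichlet W ν + (1 / ε) * ∫ x in I01, ∫ t, Phi t ∂(ν x)

/-- The graphon total-variation functional on Young measures. -/
def graphonTV (V : ℝ → ℝ → ℝ) (ν : ℝ → Measure ℝ) : EReal :=
  if ∀ᵐ x ∂(volume.restrict I01), ν x ({-1, 1} : Set ℝ) = 1 then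
    ((2 * ∫ x in I01, ∫ y in I01,
        V x y * ∫ t, (∫ s, |s - t| ∂(ν x)) ∂(ν y) : ℝ) : EReal)
  else ⊤

/-- Γ-convergence of functionals with values in `ℝ ∪ {±∞}`. -/
def GammaConv {X : Type*} (conv : (ℕ → X) → X → Prop)
    (F : ℕ → X → EReal) (Flim : X → EReal) : Prop :=
  (∀ (xs : ℕ → X) (x : X), conv xs x →
      Flim x ≤ Filter.liminf (fun n => F n (xs n)) Filter.atTop) ∧
  (∀ x : X, ∃ xs : ℕ → X, conv xs x ∧
      Filter.limsup (fun n => F n (xs n)) Filter.atTop ≤ Flim x)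

section WeakStar

variable {α β ι : Type*} [MeasurableSpace α] [MeasurableSpace β]
  {μ : Measure α} {ρ : Measure β} {l : Filter ι}

/-- Weak-* convergence in `L^∞(μ)`, as the dual of `L¹(μ)`, of functions given by
representatives. Boundedness of the family is a field because along a general filter, unlike
along a sequence, it does not follow from the convergence of the pairings. -/
structure WeakStarTendsto (μ : Measure α) (l : Filter ι) (u : ι → α → ℝ) (v : α → ℝ) : Prop where
  memLp : ∀ i, MemLp (u i) ⊤ μ
  memLp_lim : MemLp v ⊤ μ
  exists_bound : ∃ C, ∀ i, ∀ᵐ x ∂μ, ‖u i x‖ ≤ C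
  tendsto_integral : ∀ g, Integrable g μ →
    Tendsto (fun i => ∫ x, g x * u i x ∂μ) l (nhds (∫ x, g x * v x ∂μ))

theorem norm_integral_mul_le_of_ae_bound {g u : α → ℝ} {C : ℝ} (hg : Integrable g μ)
    (hu : ∀ᵐ x ∂μ, ‖u x‖ ≤ C) : ‖∫ x, g x * u x ∂μ‖ ≤ C * ∫ x, ‖g x‖ ∂μ := by
  rw [← integral_const_mul]
  refine norm_integral_le_of_norm_le (hg.norm.const_mul C) ?_
  filter_upwards [hu] with x hx
  rw [norm_mul, mul_comm]
  gcongr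

theorem integrable_mul_fst_mul_snd [SFinite μ] [SFinite ρ] {K : α × β → ℝ} {u : α → ℝ}
    {v : β → ℝ} (hK : Integrable K (μ.prod ρ)) (hu : MemLp u ⊤ μ) (hv : MemLp v ⊤ ρ) :
    Integrable (fun p => K p * (u p.1 * v p.2)) (μ.prod ρ) := by
  have hu_bound : ∀ᵐ p ∂μ.prod ρ, ‖u p.1‖ ≤ lpNorm u ⊤ μ :=
    Measure.quasiMeasurePreserving_fst.ae (ae_le_lpNorm_exponent_top hu)
  have hv_bound : ∀ᵐ p ∂μ.prod ρ, ‖v p.2‖ ≤ lpNorm v ⊤ ρ :=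
    Measure.quasiMeasurePreserving_snd.ae (ae_le_lpNorm_exponent_top hv)
  simpa only [mul_assoc] using
    (hK.mul_bdd hu.aestronglyMeasurable.comp_fst hu_bound).mul_bdd
      hv.aestronglyMeasurable.comp_snd hv_bound

theorem WeakStarTendsto.tendsto_integral_mul_of_tendsto_L1 {u : ι → α → ℝ} {v : α → ℝ}
    {G : ι → α → ℝ} {H : α → ℝ} (hu : WeakStarTendsto μ l u v) (hG : ∀ i, Integrable (G i) μ)
    (hH : Integrable H μ) (hGH : Tendsto (fun i => ∫ x, ‖G i x - H x‖ ∂μ) l (nhds 0)) :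
    Tendsto (fun i => ∫ x, G i x * u i x ∂μ) l (nhds (∫ x, H x * v x ∂μ)) := by
  obtain ⟨C, hC⟩ := hu.exists_bound
  have split : ∀ i, ∫ x, G i x * u i x ∂μ =
      ∫ x, (G i x - H x) * u i x ∂μ + ∫ x, H x * u i x ∂μ := fun i => by
    refine .trans ?_ (integral_add (((hG i).sub hH).mul_of_top_left (hu.memLp i))
      (hH.mul_of_top_left (hu.memLp i)))
    exact integral_congr_ae (.of_forall fun x => by simp [sub_mul])
  have error : Tendsto (fun i => ∫ x, (G i x - H x) * u i x ∂μ) l (nhds 0) :=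
    squeeze_zero_norm (fun i => norm_integral_mul_le_of_ae_bound ((hG i).sub hH) (hC i))
      (by simpa using hGH.const_mul C)
  simpa only [split, zero_add] using error.add (hu.tendsto_integral H hH)

theorem WeakStarTendsto.tendsto_L1_integral_kernel [SFinite μ] [SFinite ρ]
    [l.IsCountablyGenerated] {K : α × β → ℝ} {u : ι → β → ℝ} {v : β → ℝ}
    (hu : WeakStarTendsto ρ l u v) (hK : Integrable K (μ.prod ρ)) :
    Tendsto (fun i => ∫ x, ‖∫ y, K (x, y) * u i y ∂ρ - ∫ y, K (x, y) * v y ∂ρ‖ ∂μ) l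
      (nhds 0) := by
  obtain ⟨C, hC⟩ := hu.exists_bound
  have hv := ae_le_lpNorm_exponent_top hu.memLp_lim
  have meas : ∀ w : β → ℝ, MemLp w ⊤ ρ →
      AEStronglyMeasurable (fun x => ∫ y, K (x, y) * w y ∂ρ) μ := fun w hw =>
    (hK.aestronglyMeasurable.mul hw.aestronglyMeasurable.comp_snd).integral_prod_right'
  rw [← integral_zero α ℝ (μ := μ)]
  refine tendsto_integral_filter_of_dominated_convergence
    (fun x => (C + lpNorm v ⊤ ρ) * ∫ y, ‖K (x, y)‖ ∂ρ)
    (.of_forall fun i => ((meas _ (hu.memLp i)).sub (meas _ hu.memLp_lim)).norm)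
    (.of_forall fun i => ?_) (hK.integral_norm_prod_left.const_mul _) ?_
  · filter_upwards [hK.prod_right_ae] with x hx
    rw [norm_norm, add_mul]
    exact (norm_sub_le _ _).trans (add_le_add (norm_integral_mul_le_of_ae_bound hx (hC i))
      (norm_integral_mul_le_of_ae_bound hx hv))
  · filter_upwards [hK.prod_right_ae] with x hx
    exact tendsto_iff_norm_sub_tendsto_zero.1 (hu.tendsto_integral _ hx)

theorem WeakStarTendsto.tendsto_integral_prod [SFinite μ] [SFinite ρ] [l.IsCountablyGenerated]
    {K : α × β → ℝ} {u : ι → α → ℝ} {u' : α → ℝ} {v : ι → β → ℝ} {v' : β → ℝ}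
    (hu : WeakStarTendsto μ l u u') (hv : WeakStarTendsto ρ l v v')
    (hK : Integrable K (μ.prod ρ)) :
    Tendsto (fun i => ∫ p, K p * (u i p.1 * v i p.2) ∂(μ.prod ρ)) l
      (nhds (∫ p, K p * (u' p.1 * v' p.2) ∂(μ.prod ρ))) := by
  have fubini : ∀ {a : α → ℝ} {b : β → ℝ}, MemLp a ⊤ μ → MemLp b ⊤ ρ →
      ∫ p, K p * (a p.1 * b p.2) ∂(μ.prod ρ) =
        ∫ x, (∫ y, K (x, y) * b y ∂ρ) * a x ∂μ := fun {a b} ha hb => by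
    rw [integral_prod _ (integrable_mul_fst_mul_snd hK ha hb)]
    simp only [← integral_mul_const, mul_assoc, mul_comm (b _)]
  have integrable_kernel : ∀ {b : β → ℝ}, MemLp b ⊤ ρ →
      Integrable (fun x => ∫ y, K (x, y) * b y ∂ρ) μ := fun {b} hb => by
    simpa using (integrable_mul_fst_mul_snd hK (memLp_top_const (1 : ℝ)) hb).integral_prod_left
  rw [fubini hu.memLp_lim hv.memLp_lim]
  simp only [fubini (hu.memLp _) (hv.memLp _)]
  exact hu.tendsto_integral_mul_of_tendsto_L1 (fun i => integrable_kernel (hv.memLp i))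
    (integrable_kernel hv.memLp_lim) (hv.tendsto_L1_integral_kernel hK)

end WeakStar

theorem gammaConv_add_penalty {X : Type*} {conv : (ℕ → X) → X → Prop} {D P : X → ℝ}
    {c : ℕ → ℝ} (hconst : ∀ x, conv (fun _ => x) x)
    (hD : ∀ xs x, conv xs x → Tendsto (fun n => D (xs n)) atTop (nhds (D x)))
    (hP : ∀ xs x, conv xs x → Tendsto (fun n => P (xs n)) atTop (nhds (P x)))
    (hP0 : ∀ x, 0 ≤ P x) (hc : Tendsto c atTop atTop) :
    GammaConv conv (fun n x => ((D x + c n * P x : ℝ) : EReal))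
      (fun x => if P x = 0 then (D x : EReal) else ⊤) := by
  refine ⟨fun xs x hx => ?_, fun x => ⟨fun _ => x, hconst x, ?_⟩⟩ <;> dsimp only <;>
    split_ifs with h
  · have hlim : Tendsto (fun n => (D (xs n) : EReal)) atTop (nhds (D x)) :=
      EReal.tendsto_coe.2 (hD xs x hx)
    rw [← hlim.liminf_eq]
    refine liminf_le_liminf ?_
    filter_upwards [hc.eventually_ge_atTop 0] with n hn
    exact EReal.coe_le_coe_iff.2 (le_add_of_nonneg_right (mul_nonneg hn (hP0 _)))
  · have hblowup : Tendsto (fun n => D (xs n) + c n * P (xs n)) atTop atTop :=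
      (hD xs x hx).add_atTop
        (hc.atTop_mul_pos ((hP0 x).lt_of_ne' h) (hP xs x hx))
    rw [(EReal.tendsto_coe_nhds_top_iff.2 hblowup).liminf_eq]
  · simp [h]
  · exact le_top

section YoungMeasure

variable {f : ℝ → ℝ}

instance : IsFiniteMeasure (volume.restrict I01) :=
  inferInstanceAs (IsFiniteMeasure (volume.restrict (Set.Ioo 0 1)))

instance (ν : YMb) (x : ℝ) : IsProbabilityMeasure (ν.1 x) := ν.2.1.2 x

theorem YMb.ae_ae_mem_Icc (ν : YMb) :
    ∀ᵐ x ∂volume.restrict I01, ∀ᵐ t ∂ν.1 x, t ∈ Set.Icc (-1 : ℝ) 1 :=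
  ν.2.2.mono fun _ hx => (mem_ae_iff_prob_eq_one measurableSet_Icc).2 hx

theorem YMb.ae_integrable (ν : YMb) (hf : Continuous f) :
    ∀ᵐ x ∂volume.restrict I01, Integrable f (ν.1 x) := by
  filter_upwards [ν.ae_ae_mem_Icc] with x hx
  rw [← Measure.restrict_eq_self_of_ae_mem hx]
  exact hf.integrableOn_Icc

theorem YMb.ae_memLp_two (ν : YMb) :
    ∀ᵐ x ∂volume.restrict I01, MemLp (fun t => t) 2 (ν.1 x) := by
  filter_upwards [ν.ae_integrable (continuous_pow 2)] with x hx
  exact (memLp_two_iff_integrable_sq continuous_id'.aestronglyMeasurable).2 hx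

theorem stronglyMeasurable_integral_of_measurable {ν : ℝ → Measure ℝ} (hν : Measurable ν)
    (hf : StronglyMeasurable f) : StronglyMeasurable (fun x => ∫ t, f t ∂(ν x)) :=
  hf.integral_kernel (κ := ⟨ν, hν⟩)

theorem exists_norm_integral_le_of_continuous (hf : Continuous f) :
    ∃ C, ∀ ν : YMb, ∀ᵐ x ∂volume.restrict I01, ‖∫ t, f t ∂(ν.1 x)‖ ≤ C := by
  obtain ⟨C, hC⟩ := isCompact_Icc.exists_bound_of_continuousOn
    (hf.continuousOn (s := Set.Icc (-1 : ℝ) 1))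
  refine ⟨C, fun ν => ?_⟩
  filter_upwards [ν.ae_ae_mem_Icc] with x hx
  simpa using norm_integral_le_of_norm_le_const (hx.mono hC)

theorem YMb.memLp_top_integral (ν : YMb) (hf : Continuous f) :
    MemLp (fun x => ∫ t, f t ∂(ν.1 x)) ⊤ (volume.restrict I01) :=
  let ⟨C, hC⟩ := exists_norm_integral_le_of_continuous hf
  memLp_top_of_bound (stronglyMeasurable_integral_of_measurable ν.2.1.1
    hf.stronglyMeasurable).aestronglyMeasurable C (hC ν)

theorem NarrowConv.weakStarTendsto {νs : ℕ → YMb} {ν : YMb}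
    (h : NarrowConv (fun n => (νs n).1) ν.1) (hf : Continuous f) :
    WeakStarTendsto (volume.restrict I01) atTop (fun n x => ∫ t, f t ∂((νs n).1 x))
      (fun x => ∫ t, f t ∂(ν.1 x)) where
  memLp n := (νs n).memLp_top_integral hf
  memLp_lim := ν.memLp_top_integral hf
  exists_bound :=
    let ⟨C, hC⟩ := exists_norm_integral_le_of_continuous hf
    ⟨C, fun n => hC (νs n)⟩
  tendsto_integral w hw := by
    -- `f` need not be bounded, but on `[-1, 1]` it agrees with a bounded continuous function.
    let F : ℝ → ℝ := fun t => f (Set.projIcc (-1 : ℝ) 1 (by norm_num) t)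
    have hF : Continuous F := hf.comp (continuous_subtype_val.comp continuous_projIcc)
    have hF_bdd : ∃ C, ∀ t, |F t| ≤ C := by
      obtain ⟨C, hC⟩ := isCompact_Icc.exists_bound_of_continuousOn
        (hf.continuousOn (s := Set.Icc (-1 : ℝ) 1))
      exact ⟨C, fun t => hC _ (Subtype.coe_prop _)⟩
    have integral_eq : ∀ κ : YMb, ∫ x in I01, w x * ∫ t, F t ∂(κ.1 x) =
        ∫ x in I01, w x * ∫ t, f t ∂(κ.1 x) := fun κ => integral_congr_ae <| by
      filter_upwards [κ.ae_ae_mem_Icc] with x hx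
      congr 1
      refine integral_congr_ae (hx.mono fun t ht => ?_)
      simp only [F, Set.projIcc_of_mem _ ht]
    simpa only [integral_eq] using h F hF hF_bdd w hw

end YoungMeasure

section Dirichlet

variable {W : ℝ → ℝ → ℝ} {f g : ℝ → ℝ}

theorem volume_restrict_I01_prod_I01 : (volume.restrict (I01 ×ˢ I01) : Measure (ℝ × ℝ)) =
    (volume.restrict I01).prod (volume.restrict I01) :=
  (Measure.prod_restrict I01 I01).symm

/-- The energy of a Young measure for the pair interaction `(s, t) ↦ f s * g t`, weighted by the
graphon `W`. Interaction kernels that are sums of such products reduce to it. -/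
def pairEnergy (W : ℝ → ℝ → ℝ) (f g : ℝ → ℝ) (ν : ℝ → Measure ℝ) : ℝ :=
  ∫ p in I01 ×ˢ I01, Function.uncurry W p * ((∫ s, f s ∂(ν p.1)) * ∫ t, g t ∂(ν p.2))

theorem YMb.integrableOn_pairEnergy (ν : YMb)
    (hW : IntegrableOn (Function.uncurry W) (I01 ×ˢ I01)) (hf : Continuous f)
    (hg : Continuous g) :
    IntegrableOn (fun p => Function.uncurry W p * ((∫ s, f s ∂(ν.1 p.1)) * ∫ t, g t ∂(ν.1 p.2)))
      (I01 ×ˢ I01) := by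
  rw [IntegrableOn, volume_restrict_I01_prod_I01] at hW ⊢
  exact integrable_mul_fst_mul_snd hW (ν.memLp_top_integral hf) (ν.memLp_top_integral hg)

theorem NarrowConv.tendsto_pairEnergy {νs : ℕ → YMb} {ν : YMb}
    (h : NarrowConv (fun n => (νs n).1) ν.1)
    (hW : IntegrableOn (Function.uncurry W) (I01 ×ˢ I01)) (hf : Continuous f)
    (hg : Continuous g) :
    Tendsto (fun n => pairEnergy W f g (νs n).1) atTop (nhds (pairEnergy W f g ν.1)) := by
  simp only [pairEnergy, volume_restrict_I01_prod_I01]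
  rw [IntegrableOn, volume_restrict_I01_prod_I01] at hW
  exact (h.weakStarTendsto hf).tendsto_integral_prod (h.weakStarTendsto hg) hW

theorem integral_sub_mul_add_mul_sq {μ : Measure ℝ} [IsFiniteMeasure μ]
    (hμ : MemLp (fun s => s) 2 μ) (a b c : ℝ) :
    ∫ s, (a - b * s + c * s ^ 2) ∂μ =
      a * (∫ _, 1 ∂μ) - b * (∫ s, s ∂μ) + c * ∫ s, s ^ 2 ∂μ := by
  have hlin : Integrable (fun s => b * s) μ := (hμ.integrable one_le_two).const_mul b
  have haff : Integrable (fun s => a - b * s) μ := (integrable_const a).sub hlin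
  rw [integral_add haff (hμ.integrable_sq.const_mul c), integral_sub (integrable_const a) hlin]
  simp only [← integral_const_mul, mul_one]

theorem integral_integral_abs_sub_sq {μ ρ : Measure ℝ} [IsFiniteMeasure μ] [IsFiniteMeasure ρ]
    (hμ : MemLp (fun s => s) 2 μ) (hρ : MemLp (fun t => t) 2 ρ) :
    ∫ t, ∫ s, |s - t| ^ 2 ∂μ ∂ρ = (∫ s, s ^ 2 ∂μ) * (∫ _, 1 ∂ρ) -
      2 * ((∫ s, s ∂μ) * ∫ t, t ∂ρ) + (∫ _, 1 ∂μ) * ∫ t, t ^ 2 ∂ρ := by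
  have inner : ∀ t, ∫ s, |s - t| ^ 2 ∂μ =
      (∫ s, s ^ 2 ∂μ) - 2 * (∫ s, s ∂μ) * t + (∫ _, 1 ∂μ) * t ^ 2 := fun t => by
    have expand : ∀ s, |s - t| ^ 2 = t ^ 2 - 2 * t * s + 1 * s ^ 2 := fun s => by
      rw [sq_abs]; ring
    simp only [expand]
    rw [integral_sub_mul_add_mul_sq hμ]
    ring
  simp only [inner]
  rw [integral_sub_mul_add_mul_sq hρ, mul_assoc 2]

theorem YMb.graphonDirichlet_eq_pairEnergy (ν : YMb)
    (hW : IntegrableOn (Function.uncurry W) (I01 ×ˢ I01)) :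
    graphonDirichlet W ν.1 = pairEnergy W (fun s => s ^ 2) (fun _ => 1) ν.1 -
      2 * pairEnergy W (fun s => s) (fun t => t) ν.1 +
      pairEnergy W (fun _ => 1) (fun t => t ^ 2) ν.1 := by
  have continuous_one : Continuous (fun _ : ℝ => (1 : ℝ)) := continuous_const
  have continuous_sq : Continuous (fun s : ℝ => s ^ 2) := continuous_pow 2
  have h20 := ν.integrableOn_pairEnergy hW continuous_sq continuous_one
  have h11 := (ν.integrableOn_pairEnergy hW continuous_id' continuous_id').const_mul 2
  have h02 := ν.integrableOn_pairEnergy hW continuous_one continuous_sq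
  simp only [pairEnergy]
  rw [← integral_const_mul, ← integral_sub' h20 h11, ← integral_add' (h20.sub h11) h02]
  refine .trans ?_ (setIntegral_prod _ ((h20.sub h11).add h02)).symm
  refine integral_congr_ae ?_
  filter_upwards [ν.ae_memLp_two] with x hx
  refine integral_congr_ae ?_
  filter_upwards [ν.ae_memLp_two] with y hy
  rw [integral_integral_abs_sub_sq hx hy]
  simp only [Function.uncurry, Pi.add_apply, Pi.sub_apply]
  ring

theorem NarrowConv.tendsto_graphonDirichlet {νs : ℕ → YMb} {ν : YMb}
    (h : NarrowConv (fun n => (νs n).1) ν.1)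
    (hW : IntegrableOn (Function.uncurry W) (I01 ×ˢ I01)) :
    Tendsto (fun n => graphonDirichlet W (νs n).1) atTop (nhds (graphonDirichlet W ν.1)) := by
  have continuous_one : Continuous (fun _ : ℝ => (1 : ℝ)) := continuous_const
  have continuous_sq : Continuous (fun s : ℝ => s ^ 2) := continuous_pow 2
  simp only [YMb.graphonDirichlet_eq_pairEnergy _ hW]
  exact ((h.tendsto_pairEnergy hW continuous_sq continuous_one).sub
    ((h.tendsto_pairEnergy hW continuous_id' continuous_id').const_mul 2)).add
    (h.tendsto_pairEnergy hW continuous_one continuous_sq)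

end Dirichlet

theorem Phi_nonneg (s : ℝ) : 0 ≤ Phi s := sq_nonneg _

theorem continuous_Phi : Continuous Phi := by
  unfold Phi
  fun_prop

theorem Phi_eq_zero_iff {s : ℝ} : Phi s = 0 ↔ s ∈ ({-1, 1} : Set ℝ) := by
  simp [Phi, sub_eq_zero, or_comm]

theorem integral_Phi_eq_zero_iff {μ : Measure ℝ} [IsProbabilityMeasure μ]
    (hμ : Integrable Phi μ) : ∫ t, Phi t ∂μ = 0 ↔ μ ({-1, 1} : Set ℝ) = 1 := by
  rw [integral_eq_zero_iff_of_nonneg Phi_nonneg hμ,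
    ← mem_ae_iff_prob_eq_one (Set.toFinite {-1, 1}).measurableSet]
  exact eventually_congr (.of_forall fun _ => Phi_eq_zero_iff)

/-- The double-well term of the graphon Ginzburg–Landau functional, without the factor `1 / ε`. -/
def doubleWellEnergy (ν : ℝ → Measure ℝ) : ℝ :=
  ∫ x in I01, ∫ t, Phi t ∂(ν x)

theorem doubleWellEnergy_nonneg (ν : ℝ → Measure ℝ) : 0 ≤ doubleWellEnergy ν :=
  integral_nonneg fun _ => integral_nonneg Phi_nonneg

theorem YMb.doubleWellEnergy_eq_zero_iff (ν : YMb) : doubleWellEnergy ν.1 = 0 ↔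
    ∀ᵐ x ∂volume.restrict I01, ν.1 x ({-1, 1} : Set ℝ) = 1 := by
  rw [doubleWellEnergy, integral_eq_zero_iff_of_nonneg (fun _ => integral_nonneg Phi_nonneg)
    ((ν.memLp_top_integral continuous_Phi).integrable le_top)]
  refine eventually_congr ?_
  filter_upwards [ν.ae_integrable continuous_Phi] with x hx using integral_Phi_eq_zero_iff hx

theorem NarrowConv.tendsto_doubleWellEnergy {νs : ℕ → YMb} {ν : YMb}
    (h : NarrowConv (fun n => (νs n).1) ν.1) :
    Tendsto (fun n => doubleWellEnergy (νs n).1) atTop (nhds (doubleWellEnergy ν.1)) := by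
  simpa only [doubleWellEnergy, one_mul] using
    (h.weakStarTendsto continuous_Phi).tendsto_integral (fun _ => 1) (integrable_const _)

theorem abs_sub_sq_eq_two_mul_abs_sub {s t : ℝ} (hs : s ∈ ({-1, 1} : Set ℝ))
    (ht : t ∈ ({-1, 1} : Set ℝ)) : |s - t| ^ 2 = 2 * |s - t| := by
  rcases hs with rfl | rfl <;> rcases ht with rfl | rfl <;> norm_num

theorem integral_integral_abs_sub_sq_eq_two_mul {μ ρ : Measure ℝ}
    (hμ : ∀ᵐ s ∂μ, s ∈ ({-1, 1} : Set ℝ)) (hρ : ∀ᵐ t ∂ρ, t ∈ ({-1, 1} : Set ℝ)) :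
    ∫ t, ∫ s, |s - t| ^ 2 ∂μ ∂ρ = 2 * ∫ t, ∫ s, |s - t| ∂μ ∂ρ := by
  simp only [← integral_const_mul]
  refine integral_congr_ae (hρ.mono fun t ht => ?_)
  exact integral_congr_ae (hμ.mono fun s hs => abs_sub_sq_eq_two_mul_abs_sub hs ht)

theorem YMb.graphonDirichlet_eq_two_mul (W : ℝ → ℝ → ℝ) (ν : YMb)
    (hν : ∀ᵐ x ∂volume.restrict I01, ν.1 x ({-1, 1} : Set ℝ) = 1) :
    graphonDirichlet W ν.1 =
      2 * ∫ x in I01, ∫ y in I01, W x y * ∫ t, (∫ s, |s - t| ∂(ν.1 x)) ∂(ν.1 y) := by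
  have hmem : ∀ᵐ x ∂volume.restrict I01, ∀ᵐ s ∂ν.1 x, s ∈ ({-1, 1} : Set ℝ) :=
    hν.mono fun _ hx => (mem_ae_iff_prob_eq_one (Set.toFinite {-1, 1}).measurableSet).2 hx
  rw [graphonDirichlet, ← integral_const_mul]
  refine integral_congr_ae (hmem.mono fun x hx => ?_)
  simp only [← integral_const_mul (2 : ℝ)]
  refine integral_congr_ae (hmem.mono fun y hy => ?_)
  dsimp only
  rw [integral_integral_abs_sub_sq_eq_two_mul hx hy, mul_left_comm]

theorem YMb.graphonTV_eq_ite (W : ℝ → ℝ → ℝ) (ν : YMb) :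
    graphonTV W ν.1 =
      if doubleWellEnergy ν.1 = 0 then (graphonDirichlet W ν.1 : EReal) else ⊤ := by
  simp only [graphonTV, ν.doubleWellEnergy_eq_zero_iff]
  split_ifs with hν
  · rw [ν.graphonDirichlet_eq_two_mul W hν]
  · rfl

theorem integrableOn_uncurry_of_bounded {W : ℝ → ℝ → ℝ} {C : ℝ}
    (hW : Measurable (Function.uncurry W)) (hC : ∀ x y, |W x y| ≤ C) :
    IntegrableOn (Function.uncurry W) (I01 ×ˢ I01) := by
  rw [IntegrableOn, volume_restrict_I01_prod_I01]
  exact .of_bound hW.aestronglyMeasurable C (.of_forall fun p => hC p.1 p.2)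

theorem graphonGL_gammaConv_graphonTV_general (W : ℝ → ℝ → ℝ)
    (hW : IntegrableOn (Function.uncurry W) (I01 ×ˢ I01))
    (ε : ℕ → ℝ) (hε : Tendsto ε atTop (nhdsWithin 0 (Set.Ioi 0))) :
    GammaConv (fun (νs : ℕ → YMb) (ν : YMb) => NarrowConv (fun n => (νs n).1) ν.1)
      (fun k ν => ((graphonGL W (ε k) ν.1 : ℝ) : EReal))
      (fun ν => graphonTV W ν.1) := by
  have hε_inv : Tendsto (fun k => 1 / ε k) atTop atTop := by
    simpa only [one_div, Function.comp_def] using tendsto_inv_nhdsGT_zero.comp hε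
  simp only [YMb.graphonTV_eq_ite]
  exact gammaConv_add_penalty (D := fun ν : YMb => graphonDirichlet W ν.1)
    (P := fun ν : YMb => doubleWellEnergy ν.1) (fun _ _ _ _ _ _ => tendsto_const_nhds)
    (fun _ _ h => h.tendsto_graphonDirichlet hW) (fun _ _ h => h.tendsto_doubleWellEnergy)
    (fun ν => doubleWellEnergy_nonneg ν.1) hε_inv

/-- For a bounded (`L^∞`) nonnegative symmetric graphon `W`, the graphon Ginzburg–Landau
functionals `GL^W_{ε_k}` Γ-converge, as `ε_k → 0⁺`, to the graphon total-variation functional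
`TV^W`, with respect to narrow convergence of Young measures. -/
theorem graphonGL_gammaConv_graphonTV
    (W : ℝ → ℝ → ℝ) (hWmeas : Measurable (Function.uncurry W))
    (hWnonneg : ∀ x y, 0 ≤ W x y) (hWsymm : ∀ x y, W x y = W y x)
    (hWbdd : ∃ C : ℝ, ∀ x y, W x y ≤ C)
    (ε : ℕ → ℝ) (hεpos : ∀ k, 0 < ε k) (hε : Tendsto ε atTop (nhds 0)) :
    GammaConv (fun (νs : ℕ → YMb) (ν : YMb) => NarrowConv (fun n => (νs n).1) ν.1)
      (fun k ν => ((graphonGL W (ε k) ν.1 : ℝ) : EReal))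
      (fun ν => graphonTV W ν.1) :=
  let ⟨_, hC⟩ := hWbdd
  graphonGL_gammaConv_graphonTV_general W (integrableOn_uncurry_of_bounded hWmeas
    fun x y => (abs_of_nonneg (hWnonneg x y)).trans_le (hC x y)) ε
    (tendsto_nhdsWithin_iff.2 ⟨hε, .of_forall hεpos⟩)
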